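/- arXiv:2305.10335 — 2 statements merged into one kernel-verified Lean document; each statement's English description precedes it below -/
import Mathlib

section
/- Let X be a random vector with values in EuclideanSpace ℝ (Fin n) whose distribution is the multivariate Gaussian measure with mean vector μ and symmetric positive semidefinite covariance matrix C. If C² = C and C μ = μ, then for every real t with t < 1/2, E[exp(t·‖X‖²)] = exp(t·‖μ‖²/(1−2t))·(1−2t)^(−(rank C)/2). -/
open MeasureTheory ProbabilityTheory
open scoped RealInnerProductSpace

/-- `X` is a random vector whose law is the multivariate Gaussian measure with mean `μ` and
covariance matrix `C`: every one-dimensional projection `⟪X, v⟫` is Gaussian with mean `⟪μ, v⟫`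
and variance `⟪C v, v⟫`. -/
def IsMultivariateGaussian {Ω : Type*} [MeasurableSpace Ω] {n : ℕ}
    (P : Measure Ω) (X : Ω → EuclideanSpace ℝ (Fin n))
    (μ : EuclideanSpace ℝ (Fin n)) (C : Matrix (Fin n) (Fin n) ℝ) : Prop :=
  Measurable X ∧
    ∀ v : EuclideanSpace ℝ (Fin n),
      P.map (fun ω => ⟪X ω, v⟫) =
        gaussianReal ⟪μ, v⟫ (⟪Matrix.toEuclideanLin C v, v⟫).toNNReal

open scoped NNReal

/-! The coordinates of `X` in an orthonormal eigenbasis of `C` are jointly Gaussian and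
uncorrelated, hence independent, so `E[exp (t ‖X‖²)]` is a product of one-dimensional Gaussian
integrals, one for each eigenvalue. When `C` is a projection the eigenvalues are `0` or `1`, and
since `C μ = μ` the mean has no component along the eigenvectors of eigenvalue `0`; the factors
then collect into the stated formula, the sum of the eigenvalues being the rank. -/

lemma gaussianPDFReal_mul_exp_mul_sq (m : ℝ) {v : ℝ≥0} (hv : v ≠ 0) {t : ℝ}
    (ht : 2 * t * v ≠ 1) (x : ℝ) :
    gaussianPDFReal m v x * Real.exp (t * x ^ 2) =
      (√(2 * Real.pi * v))⁻¹ * Real.exp (t * m ^ 2 / (1 - 2 * t * v)) *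
        Real.exp (-((1 - 2 * t * v) / (2 * v)) * (x - m / (1 - 2 * t * v)) ^ 2) := by
  have hv' : (v : ℝ) ≠ 0 := NNReal.coe_ne_zero.2 hv
  have ht' : 1 - 2 * v * t ≠ 0 := by
    rw [mul_right_comm]
    exact sub_ne_zero.2 ht.symm
  have hsquare : -(x - m) ^ 2 / (2 * v) + t * x ^ 2 =
      t * m ^ 2 / (1 - 2 * t * v) +
        -((1 - 2 * t * v) / (2 * v)) * (x - m / (1 - 2 * t * v)) ^ 2 := by
    field_simp
    ring
  rw [gaussianPDFReal_def, mul_assoc, ← Real.exp_add, hsquare, Real.exp_add, ← mul_assoc]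

lemma integral_exp_mul_sq_gaussianReal (m : ℝ) (v : ℝ≥0) {t : ℝ} (ht : 2 * t * v < 1) :
    ∫ x, Real.exp (t * x ^ 2) ∂gaussianReal m v =
      Real.exp (t * m ^ 2 / (1 - 2 * t * v)) * (1 - 2 * t * v) ^ (-1 / 2 : ℝ) := by
  obtain rfl | hv := eq_or_ne v 0
  · simp
  have hd : 0 < 1 - 2 * t * v := sub_pos.2 ht
  have : (0 : ℝ) < v := NNReal.coe_pos.2 (pos_iff_ne_zero.2 hv)
  have hsqrt : √(Real.pi / ((1 - 2 * t * v) / (2 * v))) =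
      √(2 * Real.pi * v) * (1 - 2 * t * v) ^ (-1 / 2 : ℝ) := by
    rw [neg_div, Real.rpow_neg hd.le, ← Real.sqrt_eq_rpow, ← div_eq_mul_inv,
      ← Real.sqrt_div (by positivity)]
    congr 1
    field_simp
  simp_rw [integral_gaussianReal_eq_integral_smul hv, smul_eq_mul,
    gaussianPDFReal_mul_exp_mul_sq m hv ht.ne, integral_const_mul]
  rw [integral_sub_right_eq_self
    (fun y : ℝ ↦ Real.exp (-((1 - 2 * t * v) / (2 * v)) * y ^ 2)), integral_gaussian, hsqrt]
  field_simp

section HermitianMatrix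

variable {𝕜 ι : Type*} [RCLike 𝕜] [Fintype ι] [DecidableEq ι] {A : Matrix ι ι 𝕜}
  (hA : A.IsHermitian)

lemma toEuclideanLin_eigenvectorBasis (i : ι) :
    Matrix.toEuclideanLin A (hA.eigenvectorBasis i) =
      hA.eigenvalues i • hA.eigenvectorBasis i := by
  ext j
  simpa using congrFun (hA.mulVec_eigenvectorBasis i) j

lemma inner_toEuclideanLin_eigenvectorBasis (x : EuclideanSpace 𝕜 ι) (i : ι) :
    inner 𝕜 (Matrix.toEuclideanLin A x) (hA.eigenvectorBasis i) =
      hA.eigenvalues i • inner 𝕜 x (hA.eigenvectorBasis i) := by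
  rw [Matrix.isSymmetric_toEuclideanLin_iff.2 hA, toEuclideanLin_eigenvectorBasis,
    inner_smul_right_eq_smul]

lemma eigenvalues_eq_zero_or_one_of_isIdempotentElem (hAA : IsIdempotentElem A) (i : ι) :
    hA.eigenvalues i = 0 ∨ hA.eigenvalues i = 1 :=
  hAA.spectrum_subset ℝ (hA.eigenvalues_mem_spectrum_real i)

lemma sum_eigenvalues_eq_rank_of_isIdempotentElem (hAA : IsIdempotentElem A) :
    ∑ i, hA.eigenvalues i = A.rank := by
  rw [hA.rank_eq_card_non_zero_eigs, Fintype.card_subtype, Finset.natCast_card_filter]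
  refine Finset.sum_congr rfl fun i _ ↦ ?_
  rcases eigenvalues_eq_zero_or_one_of_isIdempotentElem hA hAA i with h | h <;> simp [h]

end HermitianMatrix

namespace IsMultivariateGaussian

variable {Ω : Type*} [MeasurableSpace Ω] {n : ℕ} {P : Measure Ω}
  {X : Ω → EuclideanSpace ℝ (Fin n)} {μ : EuclideanSpace ℝ (Fin n)}
  {C : Matrix (Fin n) (Fin n) ℝ}

lemma hasLaw_inner (hX : IsMultivariateGaussian P X μ C) (v : EuclideanSpace ℝ (Fin n)) :
    HasLaw (fun ω ↦ ⟪X ω, v⟫)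
      (gaussianReal ⟪μ, v⟫ (⟪Matrix.toEuclideanLin C v, v⟫).toNNReal) P where
  aemeasurable := (hX.1.inner_const).aemeasurable
  map_eq := hX.2 v

lemma hasGaussianLaw (hX : IsMultivariateGaussian P X μ C) : HasGaussianLaw X P := by
  refine ⟨isGaussian_of_isGaussian_map fun L ↦ ?_⟩
  have hL : L ∘ X = fun ω ↦ ⟪X ω, (InnerProductSpace.toDual ℝ _).symm L⟫ := by
    ext ω
    rw [Function.comp_apply, real_inner_comm, InnerProductSpace.toDual_symm_apply]
  rw [Measure.map_map L.measurable hX.1, hL, hX.2]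
  infer_instance

lemma variance_inner (hX : IsMultivariateGaussian P X μ C) (hC : C.PosSemidef)
    (v : EuclideanSpace ℝ (Fin n)) :
    Var[fun ω ↦ ⟪X ω, v⟫; P] = ⟪Matrix.toEuclideanLin C v, v⟫ := by
  rw [(hX.hasLaw_inner v).variance_eq, variance_id_gaussianReal, Real.coe_toNNReal]
  exact (Matrix.isPositive_toEuclideanLin_iff.2 hC).inner_nonneg_left v

lemma covariance_inner (hX : IsMultivariateGaussian P X μ C) (hC : C.PosSemidef)
    (u v : EuclideanSpace ℝ (Fin n)) :
    cov[fun ω ↦ ⟪X ω, u⟫, fun ω ↦ ⟪X ω, v⟫; P] = ⟪Matrix.toEuclideanLin C u, v⟫ := by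
  have := hX.hasGaussianLaw.isProbabilityMeasure
  have hmem (w : EuclideanSpace ℝ (Fin n)) : MemLp (fun ω ↦ ⟪X ω, w⟫) 2 P :=
    (hX.hasLaw_inner w).hasGaussianLaw.memLp_two
  have hsymm : ⟪Matrix.toEuclideanLin C v, u⟫ = ⟪Matrix.toEuclideanLin C u, v⟫ := by
    rw [Matrix.isSymmetric_toEuclideanLin_iff.2 hC.isHermitian, real_inner_comm]
  have hpolar : ⟪Matrix.toEuclideanLin C (u + v), u + v⟫ =
      ⟪Matrix.toEuclideanLin C u, u⟫ + 2 * cov[fun ω ↦ ⟪X ω, u⟫, fun ω ↦ ⟪X ω, v⟫; P] +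
        ⟪Matrix.toEuclideanLin C v, v⟫ := by
    simp_rw [← hX.variance_inner hC, inner_add_right]
    exact variance_fun_add (hmem u) (hmem v)
  rw [map_add, inner_add_left, inner_add_right, inner_add_right, hsymm] at hpolar
  linarith

lemma iIndepFun_inner (hX : IsMultivariateGaussian P X μ C) (hC : C.PosSemidef)
    {ι : Type*} [Finite ι] {v : ι → EuclideanSpace ℝ (Fin n)}
    (hv : Pairwise fun i j ↦ ⟪Matrix.toEuclideanLin C (v i), v j⟫ = 0) :
    iIndepFun (fun i ω ↦ ⟪X ω, v i⟫) P := by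
  have := Fintype.ofFinite ι
  have hjoint : HasGaussianLaw (fun ω i ↦ ⟪X ω, v i⟫) P := by
    have happly : (fun ω i ↦ ⟪X ω, v i⟫) =
        fun ω ↦ ContinuousLinearMap.pi (fun i ↦ innerSL ℝ (v i)) (X ω) :=
      funext₂ fun ω i ↦ real_inner_comm _ _
    rw [happly]
    exact hX.hasGaussianLaw.map_fun (F := ι → ℝ) _
  exact hjoint.iIndepFun_of_covariance_eq_zero fun i j hij ↦
    (hX.covariance_inner hC _ _).trans (hv hij)

lemma integral_exp_mul_norm_sq (hX : IsMultivariateGaussian P X μ C) (hC : C.PosSemidef)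
    {ι : Type*} [Fintype ι] (b : OrthonormalBasis ι ℝ (EuclideanSpace ℝ (Fin n))) {l : ι → ℝ}
    (hb : ∀ i, Matrix.toEuclideanLin C (b i) = l i • b i) {t : ℝ}
    (ht : ∀ i, 2 * t * l i < 1) :
    ∫ ω, Real.exp (t * ‖X ω‖ ^ 2) ∂P =
      ∏ i, Real.exp (t * ⟪μ, b i⟫ ^ 2 / (1 - 2 * t * l i)) *
        (1 - 2 * t * l i) ^ (-1 / 2 : ℝ) := by
  have hvar (i : ι) : ⟪Matrix.toEuclideanLin C (b i), b i⟫ = l i := by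
    rw [hb, real_inner_smul_left, real_inner_self_eq_norm_sq, b.norm_eq_one, one_pow, mul_one]
  have hl (i : ι) : 0 ≤ l i :=
    hvar i ▸ (Matrix.isPositive_toEuclideanLin_iff.2 hC).inner_nonneg_left (b i)
  have hindep : iIndepFun (fun i ω ↦ ⟪X ω, b i⟫) P := hX.iIndepFun_inner hC fun i j hij ↦ by
    dsimp only
    rw [hb, real_inner_smul_left, b.inner_eq_zero hij, mul_zero]
  calc ∫ ω, Real.exp (t * ‖X ω‖ ^ 2) ∂P
      = ∫ ω, ∏ i, Real.exp (t * ⟪X ω, b i⟫ ^ 2) ∂P := by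
        simp_rw [← b.sum_sq_inner_left, Finset.mul_sum, Real.exp_sum]
    _ = ∏ i, ∫ ω, Real.exp (t * ⟪X ω, b i⟫ ^ 2) ∂P :=
        hindep.integral_fun_prod_comp (f := fun _ x ↦ Real.exp (t * x ^ 2))
          (fun i ↦ (hX.hasLaw_inner (b i)).aemeasurable) (fun _ ↦ by fun_prop)
    _ = ∏ i, ∫ x, Real.exp (t * x ^ 2) ∂gaussianReal ⟪μ, b i⟫ (l i).toNNReal := by
        refine Finset.prod_congr rfl fun i _ ↦ ?_
        rw [← hvar i]
        exact (hX.hasLaw_inner (b i)).integral_comp (f := fun x ↦ Real.exp (t * x ^ 2))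
          (by fun_prop)
    _ = _ := by
        refine Finset.prod_congr rfl fun i _ ↦ ?_
        rw [integral_exp_mul_sq_gaussianReal] <;> rw [Real.coe_toNNReal _ (hl i)]
        exact ht i

end IsMultivariateGaussian

theorem mgf_norm_sq_of_proj
    {Ω : Type*} [MeasurableSpace Ω] {n : ℕ}
    (P : Measure Ω) [IsProbabilityMeasure P]
    (X : Ω → EuclideanSpace ℝ (Fin n))
    (μ : EuclideanSpace ℝ (Fin n)) (C : Matrix (Fin n) (Fin n) ℝ)
    (hC : C.PosSemidef)
    (hX : IsMultivariateGaussian P X μ C)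
    (hCC : C * C = C) (hCμ : Matrix.toEuclideanLin C μ = μ) :
    ∀ t : ℝ, t < 1 / 2 →
      ∫ ω, Real.exp (t * ‖X ω‖ ^ 2) ∂P =
        Real.exp (t * ‖μ‖ ^ 2 / (1 - 2 * t)) * (1 - 2 * t) ^ (-(C.rank : ℝ) / 2) := by
  intro t ht
  have hH := hC.isHermitian
  let b := hH.eigenvectorBasis
  let l := hH.eigenvalues
  have hl : ∀ i, l i = 0 ∨ l i = 1 := eigenvalues_eq_zero_or_one_of_isIdempotentElem hH hCC
  have hμ (i : Fin n) : ⟪μ, b i⟫ = l i * ⟪μ, b i⟫ := by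
    simpa only [hCμ, smul_eq_mul] using inner_toEuclideanLin_eigenvectorBasis hH μ i
  have htl (i : Fin n) : 2 * t * l i < 1 := by rcases hl i with h | h <;> rw [h] <;> linarith
  have hfactor (i : Fin n) :
      Real.exp (t * ⟪μ, b i⟫ ^ 2 / (1 - 2 * t * l i)) * (1 - 2 * t * l i) ^ (-1 / 2 : ℝ) =
        Real.exp (t * ⟪μ, b i⟫ ^ 2 / (1 - 2 * t)) * (1 - 2 * t) ^ (-l i / 2) := by
    rcases hl i with h | h
    · simp [h, show ⟪μ, b i⟫ = 0 by simpa [h] using hμ i]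
    · simp [h]
  calc ∫ ω, Real.exp (t * ‖X ω‖ ^ 2) ∂P
      = ∏ i, Real.exp (t * ⟪μ, b i⟫ ^ 2 / (1 - 2 * t)) * (1 - 2 * t) ^ (-l i / 2) :=
        (hX.integral_exp_mul_norm_sq hC b (toEuclideanLin_eigenvectorBasis hH) htl).trans
          (Finset.prod_congr rfl fun i _ ↦ hfactor i)
    _ = Real.exp (t * (∑ i, ⟪μ, b i⟫ ^ 2) / (1 - 2 * t)) * (1 - 2 * t) ^ (-(∑ i, l i) / 2) := by
        rw [Finset.prod_mul_distrib, ← Real.exp_sum, ← Real.rpow_sum_of_pos (by linarith),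
          ← Finset.sum_div, ← Finset.mul_sum, ← Finset.sum_div, Finset.sum_neg_distrib]
    _ = _ := by rw [b.sum_sq_inner_left, sum_eigenvalues_eq_rank_of_isIdempotentElem hH hCC]
end

section
/- Let X be a random vector with values in EuclideanSpace ℝ (Fin n) whose distribution is the multivariate Gaussian measure with mean vector μ and symmetric positive semidefinite covariance matrix C. Suppose there exist r : ℕ and ν ≥ 0 such that for all real t in some neighborhood of 0, E[exp(t·‖X‖²)] = exp(t·ν²/(1−2t))·(1−2t)^(−r/2). Then C² = C, C μ = μ, r = rank C, and ν = ‖μ‖. -/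
open MeasureTheory ProbabilityTheory
open scoped RealInnerProductSpace

/-!
In an orthonormal eigenbasis of the covariance matrix, with eigenvalues `lᵢ`, the coordinates of `X`
are independent Gaussians with means `mᵢ`, so the cumulant generating function of `‖X‖²` is a sum of
those of scaled noncentral chi-square variables. Comparing Taylor coefficients at `0` with those of
`χ²(r, ν)` gives `∑ᵢ (lᵢ ^ (k + 1) + (k + 1) mᵢ² lᵢ ^ k) = r + (k + 1) ν²` for all `k`. This says
that `∑ᵢ (p(lᵢ) + mᵢ² p'(lᵢ)) = r p(1) + ν² p'(1)` for every polynomial `p` vanishing at `0`. By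
Hermite interpolation the values of `p` and `p'` at the finitely many nodes involved can be
prescribed independently, apart from `p(0) = 0`. Prescribing `(p, p')` as `((x² - x)², 0)`,
`(0, (x - 1)²)`, `(1_{x ≠ 0}, 0)` and `(0, 1)` gives in turn `lᵢ² = lᵢ`, `lᵢ mᵢ = mᵢ`, the value of
`r` and the value of `ν²`.
-/

open Filter
open scoped Topology Matrix

section Interpolation

open Polynomial

lemma exists_eval_eq_and_eval_derivative_eq {K : Type*} [Field K] (S : Finset K) (f g : K → K) :
    ∃ p : K[X], ∀ x ∈ S, p.eval x = f x ∧ p.derivative.eval x = g x := by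
  classical
  set P := Lagrange.interpolate S id f
  set N := Lagrange.nodal S id
  set Q := Lagrange.interpolate S id fun x ↦ (g x - P.derivative.eval x) / N.derivative.eval x
  refine ⟨P + N * Q, fun x hx ↦ ?_⟩
  have hP : P.eval x = f x := Lagrange.eval_interpolate_at_node f (Set.injOn_id _) hx
  have hQ : Q.eval x = (g x - P.derivative.eval x) / N.derivative.eval x :=
    Lagrange.eval_interpolate_at_node _ (Set.injOn_id _) hx
  have hN : N.eval x = 0 := Lagrange.eval_nodal_at_node (v := id) hx
  have hN' : N.derivative.eval x ≠ 0 := by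
    rw [show N.derivative.eval x = _ from Lagrange.eval_nodal_derivative_eval_node_eq (v := id) hx]
    exact Lagrange.eval_nodal_not_at_node fun y hy ↦ (Finset.ne_of_mem_erase hy).symm
  simp only [derivative_add, derivative_mul, eval_add, eval_mul, hP, hQ, hN, mul_div_cancel₀ _ hN']
  constructor <;> ring

variable {ι κ : Type*} [Fintype ι] [Fintype κ]

lemma sum_eval_eq_of_power_sums_eq {R : Type*} [CommRing R] {a s l : ι → R} {a' s' l' : κ → R}
    (h : ∀ k : ℕ, ∑ i, (a i * l i ^ (k + 1) + s i * ((k + 1) * l i ^ k)) =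
      ∑ j, (a' j * l' j ^ (k + 1) + s' j * ((k + 1) * l' j ^ k)))
    {p : R[X]} (hp : p.eval 0 = 0) :
    ∑ i, (a i * p.eval (l i) + s i * p.derivative.eval (l i)) =
      ∑ j, (a' j * p.eval (l' j) + s' j * p.derivative.eval (l' j)) := by
  obtain ⟨q, rfl⟩ : X ∣ p := X_dvd_iff.2 (by rwa [coeff_zero_eq_eval_zero])
  clear hp
  induction q using Polynomial.induction_on' with
  | add q₁ q₂ h₁ h₂ =>
    simp only [mul_add, derivative_add, eval_add, Finset.sum_add_distrib] at h₁ h₂ ⊢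
    linear_combination h₁ + h₂
  | monomial k c =>
    have := congrArg (c * ·) (h k)
    simp only [Finset.mul_sum] at this
    rw [X_mul_monomial]
    convert this using 2 <;> simp <;> ring

lemma sum_apply_eq_of_power_sums_eq {K : Type*} [Field K] {a s l : ι → K} {a' s' l' : κ → K}
    (h : ∀ k : ℕ, ∑ i, (a i * l i ^ (k + 1) + s i * ((k + 1) * l i ^ k)) =
      ∑ j, (a' j * l' j ^ (k + 1) + s' j * ((k + 1) * l' j ^ k)))
    {f : K → K} (hf : f 0 = 0) (g : K → K) :
    ∑ i, (a i * f (l i) + s i * g (l i)) = ∑ j, (a' j * f (l' j) + s' j * g (l' j)) := by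
  classical
  obtain ⟨p, hp⟩ := exists_eval_eq_and_eval_derivative_eq
    (insert 0 (Finset.univ.image l ∪ Finset.univ.image l')) f g
  have hp₀ : p.eval 0 = 0 := by rw [(hp 0 (by simp)).1, hf]
  have hl (i : ι) := hp (l i) (by simp)
  have hl' (j : κ) := hp (l' j) (by simp)
  simpa only [hl, hl'] using sum_eval_eq_of_power_sums_eq h hp₀

end Interpolation

lemma eq_of_eventually_hasSum_pow_succ {𝕜 : Type*} [NontriviallyNormedField 𝕜] {a b : ℕ → 𝕜}
    {f : 𝕜 → 𝕜} (ha : ∀ᶠ z in 𝓝 0, HasSum (fun n ↦ z ^ (n + 1) * a n) (f z))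
    (hb : ∀ᶠ z in 𝓝 0, HasSum (fun n ↦ z ^ (n + 1) * b n) (f z)) : a = b := by
  let shift (c : ℕ → 𝕜) : FormalMultilinearSeries 𝕜 𝕜 𝕜 :=
    .ofScalars 𝕜 fun n ↦ if n = 0 then 0 else c (n - 1)
  have coeff_shift (c : ℕ → 𝕜) (n : ℕ) : (shift c).coeff (n + 1) = c n := by
    simp [shift, FormalMultilinearSeries.coeff_ofScalars]
  have hasFPowerSeriesAt {c : ℕ → 𝕜}
      (hc : ∀ᶠ z in 𝓝 0, HasSum (fun n ↦ z ^ (n + 1) * c n) (f z)) :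
      HasFPowerSeriesAt f (shift c) 0 := by
    rw [hasFPowerSeriesAt_iff]
    filter_upwards [hc] with z hz
    rw [← hasSum_nat_add_iff' 1]
    simpa [coeff_shift, shift, FormalMultilinearSeries.coeff_ofScalars] using hz
  have h := (hasFPowerSeriesAt ha).eq_formalMultilinearSeries (hasFPowerSeriesAt hb)
  funext n
  rw [← coeff_shift a, h, coeff_shift]

section ChiSq

/-- The cumulant generating function of `l` times a noncentral chi-square variable with `a` degrees
of freedom. The noncentrality `δ` enters through `s = l * δ`, so that `l = 0` gives the constant
variable `s`; with `a = 1` and `s = m ^ 2` it is that of the square of a Gaussian variable of mean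
`m` and variance `l`. -/
noncomputable def scaledChiSqCgf (a s l t : ℝ) : ℝ :=
  t * s / (1 - 2 * t * l) - a / 2 * Real.log (1 - 2 * t * l)

lemma hasSum_scaledChiSqCgf {a s l t : ℝ} (ht : |2 * t * l| < 1) :
    HasSum (fun k : ℕ ↦ t ^ (k + 1) *
      (2 ^ k / (k + 1) * (a * l ^ (k + 1) + s * ((k + 1) * l ^ k)))) (scaledChiSqCgf a s l t) := by
  have hadd := ((hasSum_geometric_of_abs_lt_one ht).mul_left (t * s)).add
    ((Real.hasSum_pow_div_log_of_abs_lt_one ht).mul_left (a / 2))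
  rw [mul_neg, ← sub_eq_add_neg, ← div_eq_mul_inv] at hadd
  refine hadd.congr_fun fun k ↦ ?_
  field_simp
  ring

lemma eventually_abs_two_mul_mul_lt_one (l : ℝ) : ∀ᶠ t in 𝓝 (0 : ℝ), |2 * t * l| < 1 := by
  have : ContinuousAt (fun t : ℝ ↦ |2 * t * l|) 0 := by fun_prop
  exact this.eventually_lt_const (by simp)

variable {ι κ : Type*} [Fintype ι] [Fintype κ]

lemma eventually_hasSum_sum_scaledChiSqCgf (a s l : ι → ℝ) : ∀ᶠ t in 𝓝 (0 : ℝ),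
    HasSum (fun k : ℕ ↦ t ^ (k + 1) *
      (2 ^ k / (k + 1) * ∑ i, (a i * l i ^ (k + 1) + s i * ((k + 1) * l i ^ k))))
      (∑ i, scaledChiSqCgf (a i) (s i) (l i) t) := by
  filter_upwards [eventually_all.2 fun i ↦ eventually_abs_two_mul_mul_lt_one (l i)] with t ht
  simpa only [Finset.mul_sum] using hasSum_sum fun i _ ↦ hasSum_scaledChiSqCgf (ht i)

theorem sum_apply_eq_of_sum_scaledChiSqCgf_eventuallyEq {a s l : ι → ℝ} {a' s' l' : κ → ℝ}
    (h : (fun t ↦ ∑ i, scaledChiSqCgf (a i) (s i) (l i) t) =ᶠ[𝓝 0]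
      fun t ↦ ∑ j, scaledChiSqCgf (a' j) (s' j) (l' j) t)
    {f : ℝ → ℝ} (hf : f 0 = 0) (g : ℝ → ℝ) :
    ∑ i, (a i * f (l i) + s i * g (l i)) = ∑ j, (a' j * f (l' j) + s' j * g (l' j)) := by
  refine sum_apply_eq_of_power_sums_eq (fun k ↦ ?_) hf g
  have hcoeff := eq_of_eventually_hasSum_pow_succ (eventually_hasSum_sum_scaledChiSqCgf a s l) <| by
    filter_upwards [h, eventually_hasSum_sum_scaledChiSqCgf a' s' l'] with t ht hsum
    rwa [ht]
  exact mul_left_cancel₀ (by positivity) (congrFun hcoeff k)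

lemma mgf_sq_gaussianReal {m t : ℝ} {v : NNReal} (ht : 0 < 1 - 2 * t * v) :
    mgf (· ^ 2) (gaussianReal m v) t = Real.exp (scaledChiSqCgf 1 (m ^ 2) v t) := by
  obtain rfl | hv := eq_or_ne v 0
  · simp [mgf, scaledChiSqCgf]
  set d := 1 - 2 * t * v with hd
  have hv' : (v : ℝ) ≠ 0 := by exact_mod_cast hv
  have ht' : t = (1 - d) / (2 * v) := by rw [hd]; field_simp; ring
  have complete_square (x : ℝ) : gaussianPDFReal m v x • Real.exp (t * x ^ 2) =
      (√(2 * Real.pi * v))⁻¹ * Real.exp (t * m ^ 2 / d) *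
        Real.exp (-(d / (2 * v)) * (x - m / d) ^ 2) := by
    rw [gaussianPDFReal, smul_eq_mul, mul_assoc (√_)⁻¹, mul_assoc (√_)⁻¹, ← Real.exp_add,
      ← Real.exp_add, ht']
    congr 2
    field_simp
    ring
  calc mgf (· ^ 2) (gaussianReal m v) t
      = (√(2 * Real.pi * v))⁻¹ * Real.exp (t * m ^ 2 / d) * √(Real.pi / (d / (2 * v))) := by
        simp_rw [mgf, integral_gaussianReal_eq_integral_smul hv, complete_square]
        rw [integral_const_mul,
          integral_sub_right_eq_self (fun x ↦ Real.exp (-(d / (2 * v)) * x ^ 2)),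
          integral_gaussian]
    _ = Real.exp (t * m ^ 2 / d) * (√d)⁻¹ := by
        rw [show Real.pi / (d / (2 * v)) = 2 * Real.pi * v / d by field_simp,
          Real.sqrt_div (by positivity)]
        field_simp
    _ = Real.exp (scaledChiSqCgf 1 (m ^ 2) v t) := by
        rw [scaledChiSqCgf, ← hd, Real.exp_sub, div_eq_mul_inv _ (Real.exp _), Real.sqrt_eq_rpow,
          Real.rpow_def_of_pos ht, mul_comm (Real.log d), one_div]

end ChiSq

section Spectral

variable {𝕜 ι : Type*} [RCLike 𝕜] [Fintype ι] [DecidableEq ι] {A : Matrix ι ι 𝕜}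

lemma star_eigenvectorBasis_dotProduct_mulVec (hA : A.IsHermitian) (i j : ι) :
    star ⇑(hA.eigenvectorBasis i) ⬝ᵥ A *ᵥ hA.eigenvectorBasis j =
      if i = j then (hA.eigenvalues i : 𝕜) else 0 := by
  have horth := orthonormal_iff_ite.1 hA.eigenvectorBasis.orthonormal i j
  rw [EuclideanSpace.inner_eq_star_dotProduct, dotProduct_comm] at horth
  rw [hA.mulVec_eigenvectorBasis, dotProduct_smul, horth]
  obtain rfl | hij := eq_or_ne i j <;> simp [*, RCLike.real_smul_eq_coe_mul]

lemma mul_self_eq_of_eigenvalues_mul_self_eq (hA : A.IsHermitian)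
    (h : ∀ i, hA.eigenvalues i * hA.eigenvalues i = hA.eigenvalues i) : A * A = A := by
  rw [hA.spectral_theorem, ← map_mul, Matrix.diagonal_mul_diagonal]
  simp [← RCLike.ofReal_mul, h, Function.comp_def]

lemma toEuclideanLin_apply_eq_self_of_eigenvalues_mul_inner_eq (hA : A.IsHermitian)
    {v : EuclideanSpace 𝕜 ι} (h : ∀ i, hA.eigenvalues i * inner 𝕜 (hA.eigenvectorBasis i) v =
      inner 𝕜 (hA.eigenvectorBasis i) v) :
    Matrix.toEuclideanLin A v = v := by
  have heig (i : ι) : Matrix.toEuclideanLin A (hA.eigenvectorBasis i) =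
      (hA.eigenvalues i : 𝕜) • hA.eigenvectorBasis i := by
    ext j
    simpa [RCLike.real_smul_eq_coe_mul] using congrFun (hA.mulVec_eigenvectorBasis i) j
  refine InnerProductSpace.ext_inner_left_basis hA.eigenvectorBasis.toBasis fun i ↦ ?_
  rw [hA.eigenvectorBasis.coe_toBasis, ← Matrix.isSymmetric_toEuclideanLin_iff.2 hA, heig,
    inner_smul_left, RCLike.conj_ofReal, h]

end Spectral

section Gaussian

variable {ι : Type*} [Fintype ι] [DecidableEq ι] {μ : EuclideanSpace ℝ ι} {S : Matrix ι ι ℝ}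

lemma map_inner_multivariateGaussian (hS : S.PosSemidef) (u : EuclideanSpace ℝ ι) :
    (multivariateGaussian μ S).map (⟪u, ·⟫) = gaussianReal ⟪u, μ⟫ (u ⬝ᵥ S *ᵥ u).toNNReal := by
  have hmean : ∫ x, innerSL ℝ u x ∂(multivariateGaussian μ S) = ⟪u, μ⟫ := by
    rw [ContinuousLinearMap.integral_comp_id_comm IsGaussian.integrable_id,
      integral_id_multivariateGaussian, innerSL_apply_apply]
  have hvar : Var[innerSL ℝ u; multivariateGaussian μ S] = u ⬝ᵥ S *ᵥ u := by
    rw [← covarianceBilin_multivariateGaussian hS, covarianceBilin_self IsGaussian.memLp_two_id]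
    rfl
  rw [← hmean, ← hvar]
  exact IsGaussian.map_eq_gaussianReal (innerSL ℝ u)

lemma iIndepFun_inner_multivariateGaussian {κ : Type*} [Finite κ] (hS : S.PosSemidef)
    {u : κ → EuclideanSpace ℝ ι} (hu : Pairwise fun i j ↦ u i ⬝ᵥ S *ᵥ u j = 0) :
    iIndepFun (fun i x ↦ ⟪u i, x⟫) (multivariateGaussian μ S) := by
  have := Fintype.ofFinite κ
  have hlaw : HasGaussianLaw (fun x i ↦ ⟪u i, x⟫) (multivariateGaussian μ S) :=
    IsGaussian.hasGaussianLaw_id.map_fun (ContinuousLinearMap.pi fun i ↦ innerSL ℝ (u i))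
  refine hlaw.iIndepFun_of_covariance_eq_zero fun i j hij ↦ ?_
  rw [← covarianceBilin_apply_eq_cov IsGaussian.memLp_two_id,
    covarianceBilin_multivariateGaussian hS, hu hij]

lemma iIndepFun_inner_eigenvectorBasis_multivariateGaussian (hS : S.PosSemidef) :
    iIndepFun (fun i x ↦ ⟪hS.1.eigenvectorBasis i, x⟫) (multivariateGaussian μ S) :=
  iIndepFun_inner_multivariateGaussian hS fun i j hij ↦ by
    simpa [hij] using star_eigenvectorBasis_dotProduct_mulVec hS.1 i j

lemma map_inner_eigenvectorBasis_multivariateGaussian (hS : S.PosSemidef) (i : ι) :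
    (multivariateGaussian μ S).map (⟪hS.1.eigenvectorBasis i, ·⟫) =
      gaussianReal ⟪hS.1.eigenvectorBasis i, μ⟫ (hS.1.eigenvalues i).toNNReal := by
  have heig := star_eigenvectorBasis_dotProduct_mulVec hS.1 i i
  rw [star_trivial, if_pos rfl, RCLike.ofReal_real_eq_id, id] at heig
  rw [map_inner_multivariateGaussian hS, heig]

theorem mgf_norm_sq_multivariateGaussian (hS : S.PosSemidef) {t : ℝ}
    (ht : ∀ i, 0 < 1 - 2 * t * hS.1.eigenvalues i) :
    mgf (‖·‖ ^ 2) (multivariateGaussian μ S) t =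
      Real.exp (∑ i, scaledChiSqCgf 1 (⟪hS.1.eigenvectorBasis i, μ⟫ ^ 2)
        (hS.1.eigenvalues i) t) := by
  set b := hS.1.eigenvectorBasis
  have hmgf (i : ι) : mgf (fun x ↦ ⟪b i, x⟫ ^ 2) (multivariateGaussian μ S) t =
      Real.exp (scaledChiSqCgf 1 (⟪b i, μ⟫ ^ 2) (hS.1.eigenvalues i) t) := by
    have hcoe := Real.coe_toNNReal _ (hS.eigenvalues_nonneg i)
    calc mgf (fun x ↦ ⟪b i, x⟫ ^ 2) (multivariateGaussian μ S) t
        = mgf (· ^ 2) ((multivariateGaussian μ S).map (⟪b i, ·⟫)) t :=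
          (mgf_map (X := (· ^ 2)) (Y := (⟪b i, ·⟫)) (by fun_prop) (by fun_prop)).symm
      _ = Real.exp (scaledChiSqCgf 1 (⟪b i, μ⟫ ^ 2) (hS.1.eigenvalues i) t) := by
          rw [map_inner_eigenvectorBasis_multivariateGaussian hS,
            mgf_sq_gaussianReal (by rw [hcoe]; exact ht i), hcoe]
  have hindep : iIndepFun (fun i x ↦ ⟪b i, x⟫ ^ 2) (multivariateGaussian μ S) :=
    (iIndepFun_inner_eigenvectorBasis_multivariateGaussian hS).comp (fun _ x ↦ x ^ 2) (by fun_prop)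
  calc mgf (‖·‖ ^ 2) (multivariateGaussian μ S) t
      = mgf (∑ i, fun x ↦ ⟪b i, x⟫ ^ 2) (multivariateGaussian μ S) t := by
        congr 1
        ext x
        simp [b.sum_sq_inner_right]
    _ = _ := by
        rw [hindep.mgf_sum (by fun_prop), Real.exp_sum]
        exact Finset.prod_congr rfl fun i _ ↦ hmgf i

end Gaussian

lemma IsMultivariateGaussian.map_eq_multivariateGaussian {Ω : Type*} [MeasurableSpace Ω] {n : ℕ}
    {P : Measure Ω} [IsFiniteMeasure P] {X : Ω → EuclideanSpace ℝ (Fin n)}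
    {μ : EuclideanSpace ℝ (Fin n)} {C : Matrix (Fin n) (Fin n) ℝ} (hC : C.PosSemidef)
    (hX : IsMultivariateGaussian P X μ C) : P.map X = multivariateGaussian μ C := by
  obtain ⟨hXm, hXv⟩ := hX
  refine Measure.ext_of_charFun (funext fun v ↦ ?_)
  have hvar : ⟪Matrix.toEuclideanLin C v, v⟫ = v ⬝ᵥ C *ᵥ v := by
    simp [EuclideanSpace.inner_eq_star_dotProduct]
  calc charFun (P.map X) v = charFun (P.map fun ω ↦ ⟪X ω, v⟫) 1 := by
        rw [charFun_apply, charFun_apply, integral_map (by fun_prop) (by fun_prop),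
          integral_map (by fun_prop) (by fun_prop)]
        simp
    _ = charFun (multivariateGaussian μ C) v := by
        rw [hXv, charFun_gaussianReal, charFun_multivariateGaussian hC, hvar,
          Real.coe_toNNReal _ (by simpa using hC.dotProduct_mulVec_nonneg v)]
        simp [real_inner_comm]

lemma exp_mul_rpow_eq_exp_scaledChiSqCgf {r s t : ℝ} (ht : 0 < 1 - 2 * t) :
    Real.exp (t * s / (1 - 2 * t)) * (1 - 2 * t) ^ (-r / 2) =
      Real.exp (scaledChiSqCgf r s 1 t) := by
  rw [Real.rpow_def_of_pos ht, ← Real.exp_add, scaledChiSqCgf, mul_one]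
  ring_nf

section Converse

variable {ι : Type*} [Fintype ι] [DecidableEq ι] {μ : EuclideanSpace ℝ ι} {S : Matrix ι ι ℝ}
  {r δ : ℝ}

lemma sum_apply_eigenvalues_eq_of_mgf_norm_sq_eventuallyEq (hS : S.PosSemidef)
    (h : mgf (‖·‖ ^ 2) (multivariateGaussian μ S) =ᶠ[𝓝 0] fun t ↦
      Real.exp (t * δ / (1 - 2 * t)) * (1 - 2 * t) ^ (-r / 2))
    {f : ℝ → ℝ} (hf : f 0 = 0) (g : ℝ → ℝ) :
    ∑ i, (f (hS.1.eigenvalues i) + ⟪hS.1.eigenvectorBasis i, μ⟫ ^ 2 * g (hS.1.eigenvalues i)) =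
      r * f 1 + δ * g 1 := by
  have hpos (l : ℝ) : ∀ᶠ t in 𝓝 (0 : ℝ), 0 < 1 - 2 * t * l :=
    (eventually_abs_two_mul_mul_lt_one l).mono fun t ht ↦ sub_pos.2 (lt_of_abs_lt ht)
  have hcgf : (fun t ↦ ∑ i, scaledChiSqCgf 1 (⟪hS.1.eigenvectorBasis i, μ⟫ ^ 2)
      (hS.1.eigenvalues i) t) =ᶠ[𝓝 0] fun t ↦ ∑ _ : Unit, scaledChiSqCgf r δ 1 t := by
    filter_upwards [h, eventually_all.2 fun i ↦ hpos (hS.1.eigenvalues i), hpos 1] with t ht hl h1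
    rw [mul_one] at h1
    rw [mgf_norm_sq_multivariateGaussian hS hl, exp_mul_rpow_eq_exp_scaledChiSqCgf h1] at ht
    simpa using ht
  simpa using sum_apply_eq_of_sum_scaledChiSqCgf_eventuallyEq hcgf hf g

theorem of_mgf_norm_sq_multivariateGaussian_eventuallyEq (hS : S.PosSemidef)
    (h : mgf (‖·‖ ^ 2) (multivariateGaussian μ S) =ᶠ[𝓝 0] fun t ↦
      Real.exp (t * δ / (1 - 2 * t)) * (1 - 2 * t) ^ (-r / 2)) :
    S * S = S ∧ Matrix.toEuclideanLin S μ = μ ∧ r = S.rank ∧ δ = ‖μ‖ ^ 2 := by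
  have hsum {f : ℝ → ℝ} (hf : f 0 = 0) (g : ℝ → ℝ) :=
    sum_apply_eigenvalues_eq_of_mgf_norm_sq_eventuallyEq hS h hf g
  set b := hS.1.eigenvectorBasis
  set l := hS.1.eigenvalues
  refine ⟨mul_self_eq_of_eigenvalues_mul_self_eq hS.1 fun i ↦ ?_,
    toEuclideanLin_apply_eq_self_of_eigenvalues_mul_inner_eq hS.1 fun i ↦ ?_, ?_, ?_⟩
  · have hsq : ∑ i, (l i * l i - l i) * (l i * l i - l i) = 0 := by
      simpa using hsum (f := fun x ↦ (x * x - x) * (x * x - x)) (by simp) 0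
    exact sub_eq_zero.1 (Finset.sum_mul_self_eq_zero_iff _ _ |>.1 hsq i (Finset.mem_univ i))
  · have hsq : ∑ i, (l i * ⟪b i, μ⟫ - ⟪b i, μ⟫) * (l i * ⟪b i, μ⟫ - ⟪b i, μ⟫) = 0 := by
      calc _ = ∑ i, ⟪b i, μ⟫ ^ 2 * ((l i - 1) * (l i - 1)) :=
            Finset.sum_congr rfl fun i _ ↦ by ring
        _ = 0 := by simpa using hsum (f := 0) rfl fun x ↦ (x - 1) * (x - 1)
    exact sub_eq_zero.1 (Finset.sum_mul_self_eq_zero_iff _ _ |>.1 hsq i (Finset.mem_univ i))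
  · have hcard : ∑ i, (if l i = 0 then (0 : ℝ) else 1) = r := by
      simpa using hsum (f := fun x ↦ if x = 0 then 0 else 1) (by simp) 0
    rw [hS.1.rank_eq_card_non_zero_eigs, Fintype.card_subtype, ← hcard]
    simp [l, Finset.card_filter, ite_not]
  · rw [← b.sum_sq_inner_right μ]
    simpa using (hsum (f := 0) rfl 1).symm

end Converse

theorem of_mgf_chiSquare_general
    {Ω : Type*} [MeasurableSpace Ω] {n : ℕ}
    (P : Measure Ω) [IsFiniteMeasure P]
    (X : Ω → EuclideanSpace ℝ (Fin n))
    (μ : EuclideanSpace ℝ (Fin n)) (C : Matrix (Fin n) (Fin n) ℝ)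
    (hC : C.PosSemidef)
    (hX : IsMultivariateGaussian P X μ C)
    (r δ : ℝ)
    (hmgf : ∀ᶠ t in nhds (0 : ℝ),
      ∫ ω, Real.exp (t * ‖X ω‖ ^ 2) ∂P =
        Real.exp (t * δ / (1 - 2 * t)) * (1 - 2 * t) ^ (-r / 2)) :
    C * C = C ∧ Matrix.toEuclideanLin C μ = μ ∧ r = C.rank ∧ δ = ‖μ‖ ^ 2 := by
  refine of_mgf_norm_sq_multivariateGaussian_eventuallyEq hC (hmgf.mono fun t ht ↦ ?_)
  rw [← hX.map_eq_multivariateGaussian hC, mgf_map hX.1.aemeasurable (by fun_prop)]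
  exact ht

theorem of_mgf_chiSquare
    {Ω : Type*} [MeasurableSpace Ω] {n : ℕ}
    (P : Measure Ω) [IsProbabilityMeasure P]
    (X : Ω → EuclideanSpace ℝ (Fin n))
    (μ : EuclideanSpace ℝ (Fin n)) (C : Matrix (Fin n) (Fin n) ℝ)
    (hC : C.PosSemidef)
    (hX : IsMultivariateGaussian P X μ C)
    (r : ℕ) (ν : ℝ) (hν : 0 ≤ ν)
    (hmgf : ∀ᶠ t in nhds (0 : ℝ),
      ∫ ω, Real.exp (t * ‖X ω‖ ^ 2) ∂P =
        Real.exp (t * ν ^ 2 / (1 - 2 * t)) * (1 - 2 * t) ^ (-(r : ℝ) / 2)) :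
    C * C = C ∧ Matrix.toEuclideanLin C μ = μ ∧ r = C.rank ∧ ν = ‖μ‖ := by
  obtain ⟨hCC, hCμ, hr, hν'⟩ := of_mgf_chiSquare_general P X μ C hC hX r (ν ^ 2) hmgf
  exact ⟨hCC, hCμ, mod_cast hr, (sq_eq_sq₀ hν (norm_nonneg μ)).1 hν'⟩
end
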